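/- arXiv:1806.03920 — 2 statements merged into one kernel-verified Lean document; each statement's English description precedes it below -/
import Mathlib

section
/- Let n ≥ 1, let T₁,…,Tₙ : H → Set H be monotone operators on a real Hilbert space H, and let points x_i, y_i ∈ H satisfy y_i ∈ T_i x_i for i = 1,…,n. Then for every point (z, w₁, …, w_{n−1}) in the extended solution set S, the separator function satisfies φ(z, w₁,…,w_{n−1}) ≤ 0. -/
open scoped RealInnerProductSpace

/-- A set-valued operator `T : H → Set H` is monotone. -/
def IsMonotoneOp {H : Type*} [NormedAddCommGroup H] [InnerProductSpace ℝ H]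
    (T : H → Set H) : Prop :=
  ∀ x x' y y', y ∈ T x → y' ∈ T x' → 0 ≤ ⟪x - x', y - y'⟫

section

variable {H : Type*} [AddCommGroup H] {m : ℕ}

/-- The extended solution set `S` of the inclusion `0 ∈ T₁ z + ⋯ + Tₙ z`, where `n = m + 1`. A point
`(z, w₁, …, w_{n-1})` of `Hⁿ` is encoded as a pair `(z, w)`, and `Tₙ` is `T (Fin.last m)`. -/
def extendedSolutionSet (T : Fin (m + 1) → H → Set H) : Set (H × (Fin m → H)) :=
  {p | (∀ i : Fin m, p.2 i ∈ T i.castSucc p.1) ∧ -(∑ i, p.2 i) ∈ T (Fin.last m) p.1}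

/-- The family `(w₁, …, wₙ)` with `wₙ = -(w₁ + ⋯ + w_{n-1})`. Restoring this last term makes the
definitions of `S` and `φ` symmetric in the `n` operators. -/
def snocNegSum (w : Fin m → H) : Fin (m + 1) → H :=
  Fin.snoc (α := fun _ => H) w (-∑ i, w i)

theorem mem_extendedSolutionSet_iff {T : Fin (m + 1) → H → Set H} {p : H × (Fin m → H)} :
    p ∈ extendedSolutionSet T ↔ ∀ i, snocNegSum p.2 i ∈ T i p.1 := by
  simp [extendedSolutionSet, snocNegSum, Fin.forall_fin_succ']

end

section

variable {H : Type*} [NormedAddCommGroup H] [InnerProductSpace ℝ H] {m : ℕ}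

/-- The separator function `φ` of the points `(xᵢ, yᵢ)`, on the same encoding of `Hⁿ` as
`extendedSolutionSet`. -/
def separator (x y : Fin (m + 1) → H) (p : H × (Fin m → H)) : ℝ :=
  (∑ i : Fin m, ⟪p.1 - x i.castSucc, y i.castSucc - p.2 i⟫)
    + ⟪p.1 - x (Fin.last m), y (Fin.last m) + ∑ i, p.2 i⟫

theorem separator_eq_sum (x y : Fin (m + 1) → H) (p : H × (Fin m → H)) :
    separator x y p = ∑ i, ⟪p.1 - x i, y i - snocNegSum p.2 i⟫ := by
  simp [separator, snocNegSum, Fin.sum_univ_castSucc]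

theorem IsMonotoneOp.inner_sub_sub_nonpos {T : H → Set H} (hT : IsMonotoneOp T)
    {x y z v : H} (hy : y ∈ T x) (hv : v ∈ T z) : ⟪z - x, y - v⟫ ≤ 0 := by
  rw [← neg_sub v y, inner_neg_right, neg_nonpos]
  exact hT z x v y hv hy

theorem separator_nonpos_on_extended_solution_set_general {T : Fin (m + 1) → H → Set H}
    (hT : ∀ i, IsMonotoneOp (T i)) {x y : Fin (m + 1) → H} (hxy : ∀ i, y i ∈ T i (x i))
    {p : H × (Fin m → H)} (hp : p ∈ extendedSolutionSet T) : separator x y p ≤ 0 := by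
  rw [separator_eq_sum]
  exact Finset.sum_nonpos fun i _ =>
    (hT i).inner_sub_sub_nonpos (hxy i) (mem_extendedSolutionSet_iff.mp hp i)

end

/-- If `T 0, …, T m` (`n = m+1 ≥ 1` operators) are monotone,
`yᵢ ∈ Tᵢ xᵢ` for every `i`, and `(z, w₁, …, w_{n−1})` belongs to the extended solution
set `S`, then the separator function satisfies `φ(z, w₁,…,w_{n−1}) ≤ 0`. -/
theorem separator_nonpos_on_extended_solution_set
    {H : Type*} [NormedAddCommGroup H] [InnerProductSpace ℝ H] [CompleteSpace H]
    (m : ℕ) (T : Fin (m+1) → H → Set H)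
    (hT : ∀ i, IsMonotoneOp (T i))
    (x y : Fin (m+1) → H) (hxy : ∀ i, y i ∈ T i (x i))
    (z : H) (w : Fin m → H)
    (hw : ∀ i : Fin m, w i ∈ T i.castSucc z)
    (hwn : -(∑ i : Fin m, w i) ∈ T (Fin.last m) z) :
    (∑ i : Fin m, ⟪z - x i.castSucc, y i.castSucc - w i⟫)
      + ⟪z - x (Fin.last m), y (Fin.last m) + ∑ i : Fin m, w i⟫ ≤ 0 :=
  separator_nonpos_on_extended_solution_set_general (p := (z, w)) hT hxy ⟨hw, hwn⟩
end

section
/- Under the hypotheses of one iteration of projective splitting at p = (z, w₁,…,w_{n−1}), suppose π := γ⁻¹‖y₁+⋯+yₙ‖² + Σ_{i=1}^{n−1}‖x_i − x_n‖² > 0 and let β > 0. Then the relaxed projection steplength α = β φ(z,w₁,…,w_{n−1})/π satisfies α ≥ β ξ₂/ξ₁ > 0, where ξ₁ = 2n[1 + 2γ⁻¹(L̄²|F| + ρ̲⁻²(1+δ))] and ξ₂ = min{(1−σ)ρ̄⁻¹, min_{j∈F}(ρ̄_j⁻¹ − L_j)}. -/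
open scoped RealInnerProductSpace

/-!
Since the `wᵢ` sum to zero, `φ` is a sum of the terms `⟪z - xᵢ, yᵢ - wᵢ⟫`, and `∑ yᵢ` is the sum of
the `yᵢ - wᵢ`. Each step makes `⟪z - xᵢ, yᵢ - wᵢ⟫` at least a multiple of `‖z - xᵢ‖²` and
`‖yᵢ - wᵢ‖²` at most a multiple of it. With `S = ∑ ‖z - xᵢ‖²` this gives `ξ₂ S ≤ φ` and `π ≤ ξ₁ S`,
hence `φ / π ≥ ξ₂ / ξ₁`. The two kinds of step need only one computation: two forward steps with
stepsize `ρ` are an inexact backward step with error `ρ (T x - T z)`, for which `σ = ρ L` and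
`δ = (ρ L)²`.
-/

namespace ProjectiveSplitting

section Norm

variable {ι E : Type*} [SeminormedAddCommGroup E]

lemma norm_add_sq_le (a b : E) : ‖a + b‖ ^ 2 ≤ 2 * (‖a‖ ^ 2 + ‖b‖ ^ 2) :=
  (pow_le_pow_left₀ (norm_nonneg _) (norm_add_le a b) 2).trans add_sq_le

lemma norm_sum_sq_le_card_mul_sum_norm_sq (s : Finset ι) (f : ι → E) :
    ‖∑ i ∈ s, f i‖ ^ 2 ≤ s.card * ∑ i ∈ s, ‖f i‖ ^ 2 :=
  (pow_le_pow_left₀ (norm_nonneg _) (norm_sum_le s f) 2).trans sq_sum_le_card_mul_sum_sq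

lemma sum_norm_sub_sq_le (s : Finset ι) (x : ι → E) (a z : E) :
    ∑ i ∈ s, ‖x i - a‖ ^ 2 ≤ 2 * (∑ i ∈ s, ‖z - x i‖ ^ 2 + s.card * ‖z - a‖ ^ 2) := by
  have hterm (i : ι) : ‖x i - a‖ ^ 2 ≤ 2 * (‖z - x i‖ ^ 2 + ‖z - a‖ ^ 2) := by
    simpa [norm_sub_rev] using norm_add_sq_le (x i - z) (z - a)
  calc ∑ i ∈ s, ‖x i - a‖ ^ 2
      ≤ ∑ i ∈ s, 2 * (‖z - x i‖ ^ 2 + ‖z - a‖ ^ 2) := Finset.sum_le_sum fun i _ => hterm i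
    _ = 2 * (∑ i ∈ s, ‖z - x i‖ ^ 2 + s.card * ‖z - a‖ ^ 2) := by
      rw [← Finset.mul_sum, Finset.sum_add_distrib, Finset.sum_const, nsmul_eq_mul]

end Norm

section Step

variable {H : Type*} [NormedAddCommGroup H] [InnerProductSpace ℝ H]

/-- A backward (resolvent) step from `z + ρ w` to the pair `(x, y)` with an error `e` that is
controlled by `σ` and `δ` relative to the displacement `z - x`. The step is a relation between
points: no operator with `y` among its values at `x` is part of the data. -/
structure IsInexactBackwardStep (ρ σ δ : ℝ) (z w x y e : H) : Prop where
  add_smul_eq : x + ρ • y = z + ρ • w + e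
  neg_le_inner : -(σ * ‖z - x‖ ^ 2) ≤ ⟪z - x, e⟫
  norm_sq_le : ‖e‖ ^ 2 ≤ δ * ‖z - x‖ ^ 2

/-- Two forward steps of the operator `T` from `(z, w)` to `(x, y)` with stepsize `ρ`. The Lipschitz
bound on `T` with constant `L` is only required between the points `z` and `x`. -/
structure IsForwardStep (ρ L : ℝ) (T : H → H) (z w x y : H) : Prop where
  eq_sub_smul : x = z - ρ • (T z - w)
  eq_apply : y = T x
  norm_sub_le : ‖T z - T x‖ ≤ L * ‖z - x‖

variable {ρ ρlo ρhi σ δ L : ℝ} {T : H → H} {z w x y e : H}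

lemma IsForwardStep.isInexactBackwardStep (h : IsForwardStep ρ L T z w x y) (hρ : 0 ≤ ρ) :
    IsInexactBackwardStep ρ (ρ * L) ((ρ * L) ^ 2) z w x y (ρ • (T x - T z)) where
  add_smul_eq := by
    nth_rw 1 [h.eq_sub_smul, h.eq_apply]
    module
  neg_le_inner := by
    have hinner : ⟪z - x, T z - T x⟫ ≤ L * ‖z - x‖ ^ 2 :=
      calc ⟪z - x, T z - T x⟫ ≤ ‖z - x‖ * ‖T z - T x‖ := real_inner_le_norm _ _
        _ ≤ ‖z - x‖ * (L * ‖z - x‖) := by gcongr; exact h.norm_sub_le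
        _ = L * ‖z - x‖ ^ 2 := by ring
    rw [← neg_sub (T z), smul_neg, inner_neg_right, real_inner_smul_right, mul_assoc]
    exact neg_le_neg (mul_le_mul_of_nonneg_left hinner hρ)
  norm_sq_le := by
    rw [norm_smul, mul_pow, mul_pow, Real.norm_eq_abs, sq_abs, norm_sub_rev, mul_assoc, ← mul_pow L]
    gcongr
    exact h.norm_sub_le

namespace IsInexactBackwardStep

lemma sub_eq_inv_smul (h : IsInexactBackwardStep ρ σ δ z w x y e) (hρ : ρ ≠ 0) :
    y - w = ρ⁻¹ • (z - x + e) := by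
  rw [eq_inv_smul_iff₀ hρ]
  linear_combination (norm := module) h.add_smul_eq

lemma mul_norm_sq_le_inner (h : IsInexactBackwardStep ρ σ δ z w x y e) (hρ : 0 < ρ) :
    (1 - σ) / ρ * ‖z - x‖ ^ 2 ≤ ⟪z - x, y - w⟫ := by
  rw [h.sub_eq_inv_smul hρ.ne', real_inner_smul_right, inner_add_right, real_inner_self_eq_norm_sq,
    div_eq_inv_mul, mul_assoc]
  gcongr
  linarith [h.neg_le_inner]

lemma norm_sub_sq_le (h : IsInexactBackwardStep ρ σ δ z w x y e) (hρ : ρ ≠ 0) :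
    ‖y - w‖ ^ 2 ≤ 2 * ((1 + δ) / ρ ^ 2) * ‖z - x‖ ^ 2 :=
  calc ‖y - w‖ ^ 2 = (ρ ^ 2)⁻¹ * ‖z - x + e‖ ^ 2 := by
        rw [h.sub_eq_inv_smul hρ, norm_smul, mul_pow, Real.norm_eq_abs, sq_abs, inv_pow]
    _ ≤ (ρ ^ 2)⁻¹ * (2 * (‖z - x‖ ^ 2 + δ * ‖z - x‖ ^ 2)) := by
        gcongr
        exact (norm_add_sq_le _ _).trans (by gcongr; exact h.norm_sq_le)
    _ = 2 * ((1 + δ) / ρ ^ 2) * ‖z - x‖ ^ 2 := by ring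

end IsInexactBackwardStep

namespace IsForwardStep

lemma mul_norm_sq_le_inner (h : IsForwardStep ρ L T z w x y) (hρ : 0 < ρ) :
    (1 / ρ - L) * ‖z - x‖ ^ 2 ≤ ⟪z - x, y - w⟫ := by
  have hconst : (1 - ρ * L) / ρ = 1 / ρ - L := by field_simp
  exact hconst ▸ (h.isInexactBackwardStep hρ.le).mul_norm_sq_le_inner hρ

lemma norm_sub_sq_le (h : IsForwardStep ρ L T z w x y) (hρ : 0 < ρ) :
    ‖y - w‖ ^ 2 ≤ 2 * (L ^ 2 + 1 / ρ ^ 2) * ‖z - x‖ ^ 2 := by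
  have hconst : (1 + (ρ * L) ^ 2) / ρ ^ 2 = L ^ 2 + 1 / ρ ^ 2 := by field_simp; ring
  exact hconst ▸ (h.isInexactBackwardStep hρ.le).norm_sub_sq_le hρ.ne'

end IsForwardStep

end Step

section FullDual

variable {G : Type*} [AddCommGroup G] {m : ℕ}

/-- The dual vectors `(w₁, …, wₙ)` with `wₙ = -(w₁ + ⋯ + w_{n-1})`, where `n = m + 1`. -/
def fullDual (w : Fin m → G) : Fin (m + 1) → G :=
  Fin.snoc w (-∑ i, w i)

lemma sum_fullDual (w : Fin m → G) : ∑ i, fullDual w i = 0 := by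
  simp [fullDual, Fin.sum_univ_castSucc]

end FullDual

section Separator

variable {H : Type*} [NormedAddCommGroup H] [InnerProductSpace ℝ H] {m : ℕ}

/-- The separator function `φ` of the points `(xᵢ, yᵢ)`, evaluated at `(z, w₁, …, w_{n-1})`, where
`n = m + 1`. -/
def separator (x y : Fin (m + 1) → H) (z : H) (w : Fin m → H) : ℝ :=
  (∑ i : Fin m, ⟪z - x i.castSucc, y i.castSucc - w i⟫)
    + ⟪z - x (Fin.last m), y (Fin.last m) + ∑ i, w i⟫

lemma separator_eq_sum_inner (x y : Fin (m + 1) → H) (z : H) (w : Fin m → H) :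
    separator x y z w = ∑ i, ⟪z - x i, y i - fullDual w i⟫ := by
  simp [separator, fullDual, Fin.sum_univ_castSucc]

lemma mul_sum_norm_sq_le_separator {x y : Fin (m + 1) → H} {z : H} {w : Fin m → H} {c : ℝ}
    (h : ∀ i, c * ‖z - x i‖ ^ 2 ≤ ⟪z - x i, y i - fullDual w i⟫) :
    c * ∑ i, ‖z - x i‖ ^ 2 ≤ separator x y z w := by
  rw [separator_eq_sum_inner, Finset.mul_sum]
  exact Finset.sum_le_sum fun i _ => h i

end Separator

section Gradient

variable {E : Type*} [SeminormedAddCommGroup E] {m : ℕ}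

/-- The quantity `π`, the squared `γ`-weighted norm of the gradient of `separator x y`. -/
noncomputable def gradientNormSq (γ : ℝ) (x y : Fin (m + 1) → E) : ℝ :=
  (1 / γ) * ‖∑ i, y i‖ ^ 2 + ∑ i : Fin m, ‖x i.castSucc - x (Fin.last m)‖ ^ 2

lemma sum_norm_sub_last_sq_le (x : Fin (m + 1) → E) (z : E) :
    ∑ i : Fin m, ‖x i.castSucc - x (Fin.last m)‖ ^ 2 ≤ 2 * (m + 1) * ∑ i, ‖z - x i‖ ^ 2 := by
  have hsum := sum_norm_sub_sq_le Finset.univ (fun i : Fin m => x i.castSucc) (x (Fin.last m)) z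
  rw [Finset.card_fin] at hsum
  have hothers : 0 ≤ (m : ℝ) * ∑ i : Fin m, ‖z - x i.castSucc‖ ^ 2 := by positivity
  rw [Fin.sum_univ_castSucc]
  linarith [sq_nonneg ‖z - x (Fin.last m)‖]

variable {x y : Fin (m + 1) → E} {z : E} {w : Fin m → E} {γ k : ℝ}

lemma norm_sum_sq_le_of_norm_sub_fullDual_sq_le
    (h : ∀ i, ‖y i - fullDual w i‖ ^ 2 ≤ k * ‖z - x i‖ ^ 2) :
    ‖∑ i, y i‖ ^ 2 ≤ (m + 1) * (k * ∑ i, ‖z - x i‖ ^ 2) :=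
  calc ‖∑ i, y i‖ ^ 2 = ‖∑ i, (y i - fullDual w i)‖ ^ 2 := by
        rw [Finset.sum_sub_distrib, sum_fullDual, sub_zero]
    _ ≤ (m + 1) * ∑ i, ‖y i - fullDual w i‖ ^ 2 := by
        simpa using norm_sum_sq_le_card_mul_sum_norm_sq Finset.univ fun i => y i - fullDual w i
    _ ≤ (m + 1) * (k * ∑ i, ‖z - x i‖ ^ 2) := by
        rw [Finset.mul_sum Finset.univ _ k]
        gcongr with i
        exact h i

lemma gradientNormSq_le (hγ : 0 ≤ γ)
    (h : ∀ i, ‖y i - fullDual w i‖ ^ 2 ≤ k * ‖z - x i‖ ^ 2) :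
    gradientNormSq γ x y ≤ (m + 1) * (2 + k / γ) * ∑ i, ‖z - x i‖ ^ 2 :=
  calc gradientNormSq γ x y
      ≤ 1 / γ * ((m + 1) * (k * ∑ i, ‖z - x i‖ ^ 2)) + 2 * (m + 1) * ∑ i, ‖z - x i‖ ^ 2 := by
        unfold gradientNormSq
        gcongr
        · exact norm_sum_sq_le_of_norm_sub_fullDual_sq_le h
        · exact sum_norm_sub_last_sq_le x z
    _ = (m + 1) * (2 + k / γ) * ∑ i, ‖z - x i‖ ^ 2 := by ring

end Gradient

section Constants

variable {ι : Type*} [Fintype ι] [Nonempty ι] [DecidableEq ι]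

/-- The constant `L̄ = max_{i ∈ F} Lᵢ`, equal to `0` if `F` is empty. The indices outside `F`
contribute `0`, so this is the maximum over `F` only for nonnegative `Lᵢ`. -/
noncomputable def maxLipschitz (F : Finset ι) (L : ι → ℝ) : ℝ :=
  Finset.univ.sup' Finset.univ_nonempty fun i => if i ∈ F then L i else 0

/-- The constant `K = L̄² |F| + ρ̲⁻² (1 + δ)`, for which `‖yᵢ - wᵢ‖² ≤ 2 K ‖z - xᵢ‖²`. -/
noncomputable def dualConst (F : Finset ι) (L : ι → ℝ) (δ ρlo : ℝ) : ℝ :=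
  maxLipschitz F L ^ 2 * (F.card : ℝ) + (1 + δ) / ρlo ^ 2

/-- The constant `ξ₂`, which bounds `φ` below by a multiple of `∑ ‖z - xᵢ‖²`. The indices outside
`B` are those of the forward steps. -/
noncomputable def separatorConst (B : Finset ι) (L ρbar : ι → ℝ) (σ ρhi : ℝ) : ℝ :=
  Finset.univ.inf' Finset.univ_nonempty fun i => if i ∈ B then (1 - σ) / ρhi else 1 / ρbar i - L i

variable {B F : Finset ι} {L ρbar : ι → ℝ} {σ δ ρlo ρhi : ℝ} {i : ι}

lemma le_maxLipschitz (hi : i ∈ F) : L i ≤ maxLipschitz F L :=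
  (if_pos hi).ge.trans (Finset.le_sup' (fun i => if i ∈ F then L i else 0) (Finset.mem_univ i))

lemma div_sq_le_dualConst : (1 + δ) / ρlo ^ 2 ≤ dualConst F L δ ρlo :=
  le_add_of_nonneg_left (by positivity)

lemma sq_add_div_sq_le_dualConst (hi : i ∈ F) (hL : 0 ≤ L i) :
    L i ^ 2 + (1 + δ) / ρlo ^ 2 ≤ dualConst F L δ ρlo := by
  have hcard : (1 : ℝ) ≤ F.card := Nat.one_le_cast.mpr (Finset.card_pos.mpr ⟨i, hi⟩)
  have hsq : L i ^ 2 ≤ maxLipschitz F L ^ 2 := pow_le_pow_left₀ hL (le_maxLipschitz hi) 2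
  exact add_le_add_left (hsq.trans (le_mul_of_one_le_right (sq_nonneg _) hcard)) _

lemma dualConst_nonneg (hδ : 0 ≤ δ) : 0 ≤ dualConst F L δ ρlo := by
  unfold dualConst
  positivity

lemma separatorConst_le_of_mem (hi : i ∈ B) : separatorConst B L ρbar σ ρhi ≤ (1 - σ) / ρhi :=
  (Finset.inf'_le (fun i => if i ∈ B then (1 - σ) / ρhi else 1 / ρbar i - L i)
    (Finset.mem_univ i)).trans (if_pos hi).le

lemma separatorConst_le_of_notMem (hi : i ∉ B) :
    separatorConst B L ρbar σ ρhi ≤ 1 / ρbar i - L i :=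
  (Finset.inf'_le (fun i => if i ∈ B then (1 - σ) / ρhi else 1 / ρbar i - L i)
    (Finset.mem_univ i)).trans (if_neg hi).le

lemma separatorConst_pos (hσ : σ < 1) (hρhi : ∀ i ∈ B, 0 < ρhi)
    (hρbar : ∀ i ∉ B, 0 < ρbar i ∧ ρbar i * L i < 1) : 0 < separatorConst B L ρbar σ ρhi := by
  refine (Finset.lt_inf'_iff _).mpr fun i _ => ?_
  split_ifs with hi
  · exact div_pos (sub_pos.mpr hσ) (hρhi i hi)
  · obtain ⟨hpos, hlt⟩ := hρbar i hi
    rwa [sub_pos, lt_div_iff₀' hpos]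

/-- The constant `ξ₁`, which bounds `π` by a multiple of `∑ ‖z - xᵢ‖²`. -/
noncomputable def gradientConst {m : ℕ} (F : Finset (Fin (m + 1))) (L : Fin (m + 1) → ℝ)
    (γ δ ρlo : ℝ) : ℝ :=
  2 * (m + 1 : ℝ) * (1 + 2 / γ * dualConst F L δ ρlo)

lemma gradientConst_pos {m : ℕ} {F : Finset (Fin (m + 1))} {L : Fin (m + 1) → ℝ} {γ δ ρlo : ℝ}
    (hγ : 0 ≤ γ) (hδ : 0 ≤ δ) : 0 < gradientConst F L γ δ ρlo := by
  have hK := dualConst_nonneg (F := F) (L := L) (ρlo := ρlo) hδ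
  unfold gradientConst
  positivity

lemma gradientNormSq_le_gradientConst_mul {E : Type*} [SeminormedAddCommGroup E] {m : ℕ}
    {F : Finset (Fin (m + 1))} {L : Fin (m + 1) → ℝ} {γ δ ρlo : ℝ} {x y : Fin (m + 1) → E} {z : E}
    {w : Fin m → E} (hγ : 0 ≤ γ) (hδ : 0 ≤ δ)
    (h : ∀ i, ‖y i - fullDual w i‖ ^ 2 ≤ 2 * dualConst F L δ ρlo * ‖z - x i‖ ^ 2) :
    gradientNormSq γ x y ≤ gradientConst F L γ δ ρlo * ∑ i, ‖z - x i‖ ^ 2 := by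
  have hK : 0 ≤ dualConst F L δ ρlo / γ := div_nonneg (dualConst_nonneg hδ) hγ
  refine (gradientNormSq_le hγ h).trans ?_
  rw [gradientConst, mul_comm 2 (m + 1 : ℝ), mul_assoc (m + 1 : ℝ) 2]
  gcongr
  linear_combination 2 * hK

end Constants

section StepBounds

variable {ι H : Type*} [Fintype ι] [Nonempty ι] [DecidableEq ι] [NormedAddCommGroup H]
  [InnerProductSpace ℝ H] {B F : Finset ι} {L ρbar : ι → ℝ} {σ δ ρ ρlo ρhi : ℝ} {i : ι}
  {T : H → H} {z w x y e : H}

lemma IsInexactBackwardStep.separatorConst_mul_le_inner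
    (h : IsInexactBackwardStep ρ σ δ z w x y e) (hi : i ∈ B) (hσ : σ ≤ 1) (hρ : 0 < ρ)
    (hρhi : ρ ≤ ρhi) : separatorConst B L ρbar σ ρhi * ‖z - x‖ ^ 2 ≤ ⟪z - x, y - w⟫ := by
  refine le_trans ?_ (h.mul_norm_sq_le_inner hρ)
  gcongr
  exact (separatorConst_le_of_mem hi).trans
    (div_le_div_of_nonneg_left (sub_nonneg.mpr hσ) hρ hρhi)

lemma IsForwardStep.separatorConst_mul_le_inner (h : IsForwardStep ρ (L i) T z w x y)
    (hi : i ∉ B) (hρ : 0 < ρ) (hρbar : ρ ≤ ρbar i) :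
    separatorConst B L ρbar σ ρhi * ‖z - x‖ ^ 2 ≤ ⟪z - x, y - w⟫ := by
  refine le_trans ?_ (h.mul_norm_sq_le_inner hρ)
  gcongr
  exact (separatorConst_le_of_notMem hi).trans
    (sub_le_sub_right (one_div_le_one_div_of_le hρ hρbar) _)

lemma IsInexactBackwardStep.norm_sub_sq_le_dualConst_mul
    (h : IsInexactBackwardStep ρ σ δ z w x y e) (hδ : 0 ≤ δ) (hρlo : 0 < ρlo) (hρ : ρlo ≤ ρ) :
    ‖y - w‖ ^ 2 ≤ 2 * dualConst F L δ ρlo * ‖z - x‖ ^ 2 := by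
  refine (h.norm_sub_sq_le (hρlo.trans_le hρ).ne').trans ?_
  gcongr
  refine le_trans ?_ div_sq_le_dualConst
  gcongr

lemma IsForwardStep.norm_sub_sq_le_dualConst_mul (h : IsForwardStep ρ (L i) T z w x y)
    (hi : i ∈ F) (hL : 0 ≤ L i) (hδ : 0 ≤ δ) (hρlo : 0 < ρlo) (hρ : ρlo ≤ ρ) :
    ‖y - w‖ ^ 2 ≤ 2 * dualConst F L δ ρlo * ‖z - x‖ ^ 2 := by
  refine (h.norm_sub_sq_le (hρlo.trans_le hρ)).trans ?_
  gcongr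
  refine le_trans ?_ (sq_add_div_sq_le_dualConst hi hL)
  gcongr
  exact le_add_of_nonneg_right hδ

end StepBounds

end ProjectiveSplitting

open ProjectiveSplitting in
theorem steplength_lower_bound_one_iteration_general
    {H : Type*} [NormedAddCommGroup H] [InnerProductSpace ℝ H]
    {m : ℕ} {γ : ℝ} (hγ : 0 < γ)
    {B F : Finset (Fin (m + 1))} (hBF : B ∪ F = Finset.univ)
    {T : Fin (m + 1) → H → H} {L : Fin (m + 1) → ℝ} (hL : ∀ i ∈ F, 0 ≤ L i)
    {z : H} {w : Fin m → H} {x y e : Fin (m + 1) → H}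
    {ρ ρbar : Fin (m + 1) → ℝ} {σ δ ρlo ρhi : ℝ} (hσ : σ < 1) (hδ : 0 ≤ δ)
    (hρlo : 0 < ρlo) (hρge : ∀ i, ρlo ≤ ρ i) (hρB : ∀ i ∈ B, ρ i ≤ ρhi)
    (hρF : ∀ i ∈ F, ρ i ≤ ρbar i ∧ ρbar i * L i < 1)
    (hback : ∀ i ∈ B, IsInexactBackwardStep (ρ i) σ δ z (fullDual w i) (x i) (y i) (e i))
    (hforw : ∀ i ∈ F, IsForwardStep (ρ i) (L i) (T i) z (fullDual w i) (x i) (y i))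
    (hπ : 0 < gradientNormSq γ x y) {β : ℝ} (hβ : 0 < β) :
    β * separatorConst B L ρbar σ ρhi / gradientConst F L γ δ ρlo
        ≤ β * separator x y z w / gradientNormSq γ x y ∧
      0 < β * separatorConst B L ρbar σ ρhi / gradientConst F L γ δ ρlo := by
  have hρ (i) : 0 < ρ i := hρlo.trans_le (hρge i)
  have hF (i) (hi : i ∉ B) : i ∈ F :=
    (Finset.mem_union.mp (hBF ▸ Finset.mem_univ i)).resolve_left hi
  set ξ₁ := gradientConst F L γ δ ρlo
  set ξ₂ := separatorConst B L ρbar σ ρhi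
  have hξ₁ : 0 < ξ₁ := gradientConst_pos hγ.le hδ
  have hξ₂ : 0 < ξ₂ := separatorConst_pos hσ (fun i hi => (hρ i).trans_le (hρB i hi))
    fun i hi => ⟨(hρ i).trans_le (hρF i (hF i hi)).1, (hρF i (hF i hi)).2⟩
  have hinner (i) : ξ₂ * ‖z - x i‖ ^ 2 ≤ ⟪z - x i, y i - fullDual w i⟫ := by
    by_cases hi : i ∈ B
    · exact (hback i hi).separatorConst_mul_le_inner hi hσ.le (hρ i) (hρB i hi)
    · exact (hforw i (hF i hi)).separatorConst_mul_le_inner hi (hρ i) (hρF i (hF i hi)).1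
  have hnorm (i) : ‖y i - fullDual w i‖ ^ 2 ≤ 2 * dualConst F L δ ρlo * ‖z - x i‖ ^ 2 := by
    by_cases hi : i ∈ B
    · exact (hback i hi).norm_sub_sq_le_dualConst_mul hδ hρlo (hρge i)
    · exact (hforw i (hF i hi)).norm_sub_sq_le_dualConst_mul (hF i hi) (hL i (hF i hi)) hδ hρlo
        (hρge i)
  have hφ := mul_sum_norm_sq_le_separator hinner
  have hπle := gradientNormSq_le_gradientConst_mul hγ.le hδ hnorm
  refine ⟨?_, by positivity⟩
  rw [div_le_div_iff₀ hξ₁ hπ]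
  calc β * ξ₂ * gradientNormSq γ x y ≤ β * ξ₂ * (ξ₁ * ∑ i, ‖z - x i‖ ^ 2) := by gcongr
    _ = β * (ξ₂ * ∑ i, ‖z - x i‖ ^ 2) * ξ₁ := by ring
    _ ≤ β * separator x y z w * ξ₁ := by gcongr

/-- The relaxed projection steplength `α = β φ(p)/π` of one iteration of
projective splitting, where `π = γ⁻¹‖y₁+⋯+yₙ‖² + Σ_{i<n}‖xᵢ−xₙ‖² > 0` is the squared
γ-weighted norm of the gradient of the separator function, is bounded below:
`α ≥ β ξ₂/ξ₁ > 0`.  Here `n = m+1 ≥ 1`. -/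
theorem steplength_lower_bound_one_iteration
    {H : Type*} [NormedAddCommGroup H] [InnerProductSpace ℝ H] [CompleteSpace H]
    (m : ℕ) (γ : ℝ) (hγ : 0 < γ)
    (B F : Finset (Fin (m+1))) (hBF : Disjoint B F) (hBFunion : B ∪ F = Finset.univ)
    (T : Fin (m+1) → H → Set H) (Tf : Fin (m+1) → H → H) (L : Fin (m+1) → ℝ)
    (hTmono : ∀ i ∈ B, ∀ x x' y y' : H, y ∈ T i x → y' ∈ T i x' → 0 ≤ ⟪x - x', y - y'⟫)
    (hTfmono : ∀ i ∈ F, ∀ u v : H, 0 ≤ ⟪u - v, Tf i u - Tf i v⟫)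
    (hL0 : ∀ i ∈ F, 0 ≤ L i)
    (hLip : ∀ i ∈ F, ∀ u v : H, ‖Tf i u - Tf i v‖ ≤ L i * ‖u - v‖)
    (z : H) (w : Fin m → H) (wfull : Fin (m+1) → H)
    (hwfull : wfull = Fin.snoc w (-(∑ i : Fin m, w i)))
    (x y : Fin (m+1) → H) (ρ : Fin (m+1) → ℝ) (e : Fin (m+1) → H)
    (σ δ : ℝ) (hσ0 : 0 ≤ σ) (hσ1 : σ < 1) (hδ : 0 ≤ δ)
    (ρlo ρhi : ℝ) (ρbar : Fin (m+1) → ℝ)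
    (hρlo : 0 < ρlo) (hρge : ∀ i, ρlo ≤ ρ i)
    (hρB : ∀ i ∈ B, ρ i ≤ ρhi)
    (hρF : ∀ i ∈ F, ρ i ≤ ρbar i ∧ ρbar i * L i < 1)
    (hback : ∀ i ∈ B, y i ∈ T i (x i) ∧ x i + ρ i • y i = z + ρ i • wfull i + e i)
    (hforw : ∀ i ∈ F, x i = z - ρ i • (Tf i z - wfull i) ∧ y i = Tf i (x i))
    (herr1 : ∀ i ∈ B, -(σ * ‖z - x i‖ ^ 2) ≤ ⟪z - x i, e i⟫)
    (herr2 : ∀ i ∈ B, ⟪e i, y i - wfull i⟫ ≤ ρ i * σ * ‖y i - wfull i‖ ^ 2)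
    (herr3 : ∀ i ∈ B, ‖e i‖ ^ 2 ≤ δ * ‖z - x i‖ ^ 2)
    (φval : ℝ)
    (hφval : φval = (∑ i : Fin m, ⟪z - x i.castSucc, y i.castSucc - w i⟫)
      + ⟪z - x (Fin.last m), y (Fin.last m) + ∑ i : Fin m, w i⟫)
    (Lbar : ℝ)
    (hLbar : Lbar = Finset.univ.sup' Finset.univ_nonempty (fun i => if i ∈ F then L i else 0))
    (ξ₁ : ℝ)
    (hξ₁ : ξ₁ = 2 * (m+1 : ℝ) *
      (1 + 2 / γ * (Lbar ^ 2 * (F.card : ℝ) + (1 + δ) / ρlo ^ 2)))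
    (ξ₂ : ℝ)
    (hξ₂ : ξ₂ = Finset.univ.inf' Finset.univ_nonempty
      (fun i => if i ∈ B then (1 - σ) / ρhi else 1 / ρbar i - L i))
    (π : ℝ)
    (hπdef : π = (1 / γ) * ‖∑ i : Fin (m+1), y i‖ ^ 2
      + ∑ i : Fin m, ‖x i.castSucc - x (Fin.last m)‖ ^ 2)
    (hπpos : 0 < π)
    (β α : ℝ) (hβ : 0 < β) (hα : α = β * φval / π) :
    β * ξ₂ / ξ₁ ≤ α ∧ 0 < β * ξ₂ / ξ₁ := by
  subst hwfull hφval hLbar hξ₁ hξ₂ hπdef hα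
  exact steplength_lower_bound_one_iteration_general hγ hBFunion hL0 hσ1 hδ hρlo hρge hρB hρF
    (fun i hi => ⟨(hback i hi).2, herr1 i hi, herr3 i hi⟩)
    (fun i hi => ⟨(hforw i hi).1, (hforw i hi).2, hLip i hi _ _⟩) hπpos hβ
end
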